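/- Consider a star-shaped compact network N_R with I ≥ 2 rays identified with [0,R] and glued at the junction x = 0, and fix T, K > 0. Under assumption (H) on the data 𝔇 (in particular a_i ≥ a̲ > 0, α_i ≥ α̲ > 0 and r ≥ 0), let u = (u_i) and v = (v_i) belong to the class 𝔠^{1,2,0}_{0}(Ω_T), with u a super-solution and v a sub-solution of the local-time Kirchhoff system, and suppose u_i(0,x,l) ≥ v_i(0,x,l) and u_i(t,x,K) ≥ v_i(t,x,K) for all i ∈ {1,…,I}, t ∈ [0,T], x ∈ [0,R], l ∈ [0,K]. Then u_i(t,x,l) ≥ v_i(t,x,l) for all i ∈ {1,…,I}, (t,x,l) ∈ [0,T]×[0,R]×[0,K]. -/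

import Mathlib

open Set

/-- Bounded Lipschitz (`W^{1,∞}`) condition on `{1,…,I}×[0,T]×[0,R]×[0,K]`. -/
def LB3 (I : ℕ) (T R K : ℝ) (h : Fin I → ℝ → ℝ → ℝ → ℝ) : Prop :=
  ∃ C, ∀ i : Fin I, ∀ t ∈ Icc (0:ℝ) T, ∀ s ∈ Icc (0:ℝ) T, ∀ x ∈ Icc (0:ℝ) R,
    ∀ y ∈ Icc (0:ℝ) R, ∀ l ∈ Icc (0:ℝ) K, ∀ m ∈ Icc (0:ℝ) K,
      |h i t x l| ≤ C ∧ |h i t x l - h i s y m| ≤ C * (|t - s| + |x - y| + |l - m|)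

/-- Bounded Lipschitz (`W^{1,∞}`) condition on `[0,T]×[0,K]`. -/
def LB2 (T K : ℝ) (h : ℝ → ℝ → ℝ) : Prop :=
  ∃ C, ∀ t ∈ Icc (0:ℝ) T, ∀ s ∈ Icc (0:ℝ) T, ∀ l ∈ Icc (0:ℝ) K, ∀ m ∈ Icc (0:ℝ) K,
    |h t l| ≤ C ∧ |h t l - h s m| ≤ C * (|t - s| + |l - m|)

/-- Bounded Lipschitz (`W^{1,∞}`) condition on `{1,…,I}×[0,T]×[0,K]`. -/
def LB2I (I : ℕ) (T K : ℝ) (h : Fin I → ℝ → ℝ → ℝ) : Prop :=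
  ∃ C, ∀ i : Fin I, ∀ t ∈ Icc (0:ℝ) T, ∀ s ∈ Icc (0:ℝ) T, ∀ l ∈ Icc (0:ℝ) K,
    ∀ m ∈ Icc (0:ℝ) K, |h i t l| ≤ C ∧ |h i t l - h i s m| ≤ C * (|t - s| + |l - m|)

/-- Membership in the class `𝔠^{1,2,0}_{0}(Ω_T)` for a family `w = (w_i)` on the
star-shaped network, with time derivative `wt`, space derivatives `wx`, `wxx` on the rays
and `l`-derivative `w0l` of the junction value `(t,l) ↦ w(t,0,l)`:
(i) junction continuity; (ii) `w_i` and `∂ₓw_i` continuous on `[0,T]×[0,R]×[0,K)`;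
(iii) `w_i ∈ C^{1,2}` in `(t,x)` on `(0,T)×(0,R)×(0,K)` with `∂ₜw_i, ∂ₓ²w_i` bounded;
(iv) `(t,l) ↦ w(t,0,l)` continuously differentiable in `l` on `[0,T]×[0,K)`. -/
def InClassC120 (I : ℕ) (T R K : ℝ)
    (w wt wx wxx : Fin I → ℝ → ℝ → ℝ → ℝ) (w0l : ℝ → ℝ → ℝ) : Prop :=
  -- (i) junction continuity
  (∀ i j : Fin I, ∀ t ∈ Icc (0:ℝ) T, ∀ l ∈ Icc (0:ℝ) K, w i t 0 l = w j t 0 l) ∧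
  -- (ii) continuity of w and of its space derivative up to the boundary
  (∀ i, ContinuousOn (fun p : ℝ × ℝ × ℝ => w i p.1 p.2.1 p.2.2)
      (Icc 0 T ×ˢ Icc 0 R ×ˢ Icc 0 K)) ∧
  (∀ i, ∀ t ∈ Icc (0:ℝ) T, ∀ x ∈ Icc (0:ℝ) R, ∀ l ∈ Ico (0:ℝ) K,
      HasDerivWithinAt (fun y => w i t y l) (wx i t x l) (Icc 0 R) x) ∧
  (∀ i, ContinuousOn (fun p : ℝ × ℝ × ℝ => wx i p.1 p.2.1 p.2.2)
      (Icc 0 T ×ˢ Icc 0 R ×ˢ Ico 0 K)) ∧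
  -- (iii) C^{1,2} regularity in (t,x) in the interior, with bounded ∂ₜw, ∂ₓ²w
  (∀ i, ∀ t ∈ Ioo (0:ℝ) T, ∀ x ∈ Ioo (0:ℝ) R, ∀ l ∈ Ioo (0:ℝ) K,
      HasDerivAt (fun s => w i s x l) (wt i t x l) t ∧
      HasDerivAt (fun y => wx i t y l) (wxx i t x l) x) ∧
  (∀ i, ContinuousOn (fun p : ℝ × ℝ × ℝ => wt i p.1 p.2.1 p.2.2)
      (Ioo 0 T ×ˢ Ioo 0 R ×ˢ Ioo 0 K)) ∧
  (∀ i, ContinuousOn (fun p : ℝ × ℝ × ℝ => wxx i p.1 p.2.1 p.2.2)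
      (Ioo 0 T ×ˢ Ioo 0 R ×ˢ Ioo 0 K)) ∧
  (∀ i, ∃ C, ∀ t ∈ Ioo (0:ℝ) T, ∀ x ∈ Ioo (0:ℝ) R, ∀ l ∈ Ioo (0:ℝ) K,
      |wt i t x l| ≤ C ∧ |wxx i t x l| ≤ C) ∧
  -- (iv) l-differentiability of the junction value
  (∀ i : Fin I, ∀ t ∈ Icc (0:ℝ) T, ∀ l ∈ Ico (0:ℝ) K,
      HasDerivWithinAt (fun m => w i t 0 m) (w0l t l) (Ico 0 K) l) ∧
  ContinuousOn (fun p : ℝ × ℝ => w0l p.1 p.2) (Icc 0 T ×ˢ Ico 0 K)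

/-- Super solution (Definition 2.7) of the local-time Kirchhoff parabolic system. -/
def SuperSol (I : ℕ) (T R K : ℝ)
    (a b c f : Fin I → ℝ → ℝ → ℝ → ℝ) (αc : Fin I → ℝ → ℝ → ℝ) (r φc : ℝ → ℝ → ℝ)
    (w wt wx wxx : Fin I → ℝ → ℝ → ℝ → ℝ) (w0l : ℝ → ℝ → ℝ) : Prop :=
  (∀ i, ∀ t ∈ Ioo (0:ℝ) T, ∀ x ∈ Ioo (0:ℝ) R, ∀ l ∈ Ioo (0:ℝ) K,
      0 ≤ wt i t x l - a i t x l * wxx i t x l + b i t x l * wx i t x l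
        + c i t x l * w i t x l - f i t x l) ∧
  (∀ i : Fin I, ∀ t ∈ Ioo (0:ℝ) T, ∀ l ∈ Ioo (0:ℝ) K,
      w0l t l + (∑ j, αc j t l * wx j t 0 l) - r t l * w i t 0 l - φc t l ≤ 0) ∧
  (∀ i, ∀ t ∈ Ioo (0:ℝ) T, ∀ l ∈ Ioo (0:ℝ) K, 0 ≤ wx i t R l)

/-- Sub solution (Definition 2.7) of the local-time Kirchhoff parabolic system. -/
def SubSol (I : ℕ) (T R K : ℝ)
    (a b c f : Fin I → ℝ → ℝ → ℝ → ℝ) (αc : Fin I → ℝ → ℝ → ℝ) (r φc : ℝ → ℝ → ℝ)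
    (w wt wx wxx : Fin I → ℝ → ℝ → ℝ → ℝ) (w0l : ℝ → ℝ → ℝ) : Prop :=
  (∀ i, ∀ t ∈ Ioo (0:ℝ) T, ∀ x ∈ Ioo (0:ℝ) R, ∀ l ∈ Ioo (0:ℝ) K,
      wt i t x l - a i t x l * wxx i t x l + b i t x l * wx i t x l
        + c i t x l * w i t x l - f i t x l ≤ 0) ∧
  (∀ i : Fin I, ∀ t ∈ Ioo (0:ℝ) T, ∀ l ∈ Ioo (0:ℝ) K,
      0 ≤ w0l t l + (∑ j, αc j t l * wx j t 0 l) - r t l * w i t 0 l - φc t l) ∧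
  (∀ i, ∀ t ∈ Ioo (0:ℝ) T, ∀ l ∈ Ioo (0:ℝ) K, wx i t R l ≤ 0)

open Filter Topology in
lemma aux_right {f : ℝ → ℝ} {d a b : ℝ} {s : Set ℝ} (hab : a < b) (hs : Icc a b ⊆ s)
    (hf : HasDerivWithinAt f d s a) (h : ∀ y ∈ Icc a b, f y ≤ f a) : d ≤ 0 := by
  have h1 : HasDerivWithinAt f d (Ioc a b) a := hf.mono (Ioc_subset_Icc_self.trans hs)
  rw [hasDerivWithinAt_iff_tendsto_slope' (by simp)] at h1
  have hne : (𝓝[Ioc a b] a).NeBot := by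
    rw [nhdsWithin_Ioc_eq_nhdsGT hab]; infer_instance
  refine le_of_tendsto h1 ?_
  filter_upwards [self_mem_nhdsWithin] with y hy
  rw [slope_def_field]
  exact div_nonpos_of_nonpos_of_nonneg (by linarith [h y ⟨hy.1.le, hy.2⟩]) (by linarith [hy.1])

open Filter Topology in
lemma aux_left {f : ℝ → ℝ} {d a b : ℝ} {s : Set ℝ} (hab : a < b) (hs : Icc a b ⊆ s)
    (hf : HasDerivWithinAt f d s b) (h : ∀ y ∈ Icc a b, f y ≤ f b) : 0 ≤ d := by
  have h1 : HasDerivWithinAt f d (Ico a b) b := hf.mono (Ico_subset_Icc_self.trans hs)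
  rw [hasDerivWithinAt_iff_tendsto_slope' (by simp)] at h1
  have hne : (𝓝[Ico a b] b).NeBot := by
    rw [nhdsWithin_Ico_eq_nhdsLT hab]; infer_instance
  refine ge_of_tendsto h1 ?_
  filter_upwards [self_mem_nhdsWithin] with y hy
  rw [slope_def_field]
  exact div_nonneg_of_nonpos (by linarith [h y ⟨hy.1, hy.2.le⟩]) (by linarith [hy.2])

open Filter Topology in
lemma aux_second {f g : ℝ → ℝ} {x D a b : ℝ} (hx : x ∈ Ioo a b)
    (hf : ∀ y ∈ Ioo a b, HasDerivAt f (g y) y) (hg : HasDerivAt g D x)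
    (h : ∀ y ∈ Ioo a b, f y ≤ f x) : g x = 0 ∧ D ≤ 0 := by
  have hnb : Ioo a b ∈ 𝓝 x := Ioo_mem_nhds hx.1 hx.2
  have hmax : IsLocalMax f x := by
    filter_upwards [hnb] with y hy using h y hy
  have h0 : g x = 0 := hmax.hasDerivAt_eq_zero (hf x hx)
  refine ⟨h0, ?_⟩
  by_contra hD
  push Not at hD
  have hdf : deriv f =ᶠ[𝓝 x] g := by
    filter_upwards [hnb] with y hy using (hf y hy).deriv
  have hdd : deriv (deriv f) x = D := by rw [hdf.deriv_eq, hg.deriv]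
  have hmin : IsLocalMin f x := isLocalMin_of_deriv_deriv_pos (by rw [hdd]; exact hD)
    (by rw [(hf x hx).deriv, h0]) (hf x hx).continuousAt
  have hc : f =ᶠ[𝓝 x] fun _ => f x := by
    filter_upwards [hmax, hmin] with y h1 h2 using le_antisymm h1 h2
  have hc2 : deriv f =ᶠ[𝓝 x] fun _ => 0 := by
    have := hc.deriv
    simpa using this
  have : deriv (deriv f) x = 0 := by rw [hc2.deriv_eq]; simp
  linarith

set_option maxHeartbeats 1000000 in
lemma aux_core
    (I : ℕ) (hI : 2 ≤ I) (T R K αl : ℝ)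
    (hR : 0 < R) (hαl : 0 < αl)
    (a b c : Fin I → ℝ → ℝ → ℝ → ℝ) (αc : Fin I → ℝ → ℝ → ℝ) (r : ℝ → ℝ → ℝ)
    (A B C : ℝ)
    (hA : ∀ i, ∀ t ∈ Icc (0:ℝ) T, ∀ x ∈ Icc (0:ℝ) R, ∀ l ∈ Icc (0:ℝ) K, 0 ≤ a i t x l ∧ a i t x l ≤ A)
    (hB : ∀ i, ∀ t ∈ Icc (0:ℝ) T, ∀ x ∈ Icc (0:ℝ) R, ∀ l ∈ Icc (0:ℝ) K, |b i t x l| ≤ B)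
    (hC : ∀ i, ∀ t ∈ Icc (0:ℝ) T, ∀ x ∈ Icc (0:ℝ) R, ∀ l ∈ Icc (0:ℝ) K, |c i t x l| ≤ C)
    (hrpos : ∀ t ∈ Icc (0:ℝ) T, ∀ l ∈ Icc (0:ℝ) K, 0 ≤ r t l)
    (hellα : ∀ i, ∀ t ∈ Icc (0:ℝ) T, ∀ l ∈ Icc (0:ℝ) K, αl ≤ αc i t l)
    (w wt wx wxx : Fin I → ℝ → ℝ → ℝ → ℝ) (w0l : ℝ → ℝ → ℝ)
    (hj : ∀ i j : Fin I, ∀ t ∈ Icc (0:ℝ) T, ∀ l ∈ Icc (0:ℝ) K, w i t 0 l = w j t 0 l)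
    (hcont : ∀ i, ContinuousOn (fun p : ℝ × ℝ × ℝ => w i p.1 p.2.1 p.2.2)
      (Icc 0 T ×ˢ Icc 0 R ×ˢ Icc 0 K))
    (hdx : ∀ i, ∀ t ∈ Icc (0:ℝ) T, ∀ x ∈ Icc (0:ℝ) R, ∀ l ∈ Ico (0:ℝ) K,
      HasDerivWithinAt (fun y => w i t y l) (wx i t x l) (Icc 0 R) x)
    (hdt : ∀ i, ∀ t ∈ Ioo (0:ℝ) T, ∀ x ∈ Ioo (0:ℝ) R, ∀ l ∈ Ioo (0:ℝ) K,
      HasDerivAt (fun s => w i s x l) (wt i t x l) t ∧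
      HasDerivAt (fun y => wx i t y l) (wxx i t x l) x)
    (hdl : ∀ i : Fin I, ∀ t ∈ Icc (0:ℝ) T, ∀ l ∈ Ico (0:ℝ) K,
      HasDerivWithinAt (fun m => w i t 0 m) (w0l t l) (Ico 0 K) l)
    (heq : ∀ i, ∀ t ∈ Ioo (0:ℝ) T, ∀ x ∈ Ioo (0:ℝ) R, ∀ l ∈ Ioo (0:ℝ) K,
      wt i t x l - a i t x l * wxx i t x l + b i t x l * wx i t x l
        + c i t x l * w i t x l ≤ 0)
    (hjun : ∀ i : Fin I, ∀ t ∈ Ioo (0:ℝ) T, ∀ l ∈ Ioo (0:ℝ) K,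
      0 ≤ w0l t l + (∑ j, αc j t l * wx j t 0 l) - r t l * w i t 0 l)
    (hend : ∀ i, ∀ t ∈ Ioo (0:ℝ) T, ∀ l ∈ Ioo (0:ℝ) K, wx i t R l ≤ 0)
    (hinit : ∀ i, ∀ x ∈ Icc (0:ℝ) R, ∀ l ∈ Icc (0:ℝ) K, w i 0 x l ≤ 0)
    (hterm : ∀ i, ∀ t ∈ Icc (0:ℝ) T, ∀ x ∈ Icc (0:ℝ) R, w i t x K ≤ 0) 
    (i0 : Fin I) (t0 : ℝ) (ht0 : t0 ∈ Ico 0 T) (x0 : ℝ) (hx0 : x0 ∈ Icc 0 R)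
    (l0 : ℝ) (hl0 : l0 ∈ Ioc 0 K) : w i0 t0 x0 l0 ≤ 0 := by
  by_contra hpos
  push Not at hpos
  have ht0T : t0 ∈ Icc 0 T := ⟨ht0.1, ht0.2.le⟩
  have hl0K : l0 ∈ Icc 0 K := ⟨hl0.1.le, hl0.2⟩
  have hA0 : 0 ≤ A := (hA i0 t0 ht0T x0 hx0 l0 hl0K).1.trans (hA i0 t0 ht0T x0 hx0 l0 hl0K).2
  have hB0 : 0 ≤ B := (abs_nonneg _).trans (hB i0 t0 ht0T x0 hx0 l0 hl0K)
  set E : ℝ → ℝ := fun t => Real.exp (-(C+1) * t) with hE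
  have hEpos : ∀ t, 0 < E t := fun t => Real.exp_pos _
  have hEd : ∀ t, HasDerivAt E (-(C+1) * E t) t := by
    intro t
    have := ((hasDerivAt_id t).const_mul (-(C+1))).exp
    simpa [hE, mul_comm] using this
  have hEc : Continuous E := by fun_prop
  set m := E t0 * w i0 t0 x0 l0 with hm
  have hmpos : 0 < m := mul_pos (hEpos _) hpos
  set S := 2 * A + B * R + R^2/4 with hS
  have hS0 : 0 ≤ S := by positivity
  obtain ⟨δ, hδ, hδm⟩ : ∃ δ, 0 < δ ∧ δ * S < m := by
    refine ⟨m / (S+1), by positivity, ?_⟩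
    rw [div_mul_eq_mul_div, div_lt_iff₀ (by positivity)]
    nlinarith
  set M : Fin I → ℝ × ℝ × ℝ → ℝ := fun i p => E p.1 * w i p.1 p.2.1 p.2.2 - δ * (p.2.1 - R/2)^2 with hM
  set Q : Set (ℝ × ℝ × ℝ) := Icc 0 t0 ×ˢ Icc 0 R ×ˢ Icc l0 K with hQ
  have hQc : IsCompact Q := isCompact_Icc.prod (isCompact_Icc.prod isCompact_Icc)
  have hp0 : (t0, x0, l0) ∈ Q := ⟨⟨ht0.1, le_rfl⟩, hx0, ⟨le_rfl, hl0.2⟩⟩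
  have hMc : ∀ i, ContinuousOn (M i) Q := by
    intro i
    have h1 : ContinuousOn (fun p : ℝ × ℝ × ℝ => w i p.1 p.2.1 p.2.2) Q :=
      (hcont i).mono (prod_mono (Icc_subset_Icc le_rfl ht0.2.le)
        (prod_mono le_rfl (Icc_subset_Icc hl0.1.le le_rfl)))
    have h2 : Continuous fun p : ℝ × ℝ × ℝ => E p.1 := hEc.comp continuous_fst
    exact (h2.continuousOn.mul h1).sub (by fun_prop)
  have hmx : ∀ i, ∃ p ∈ Q, IsMaxOn (M i) Q p := fun i => hQc.exists_isMaxOn ⟨_, hp0⟩ (hMc i)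
  choose P hP hPmax using hmx
  have : Nonempty (Fin I) := ⟨i0⟩
  obtain ⟨i, hi⟩ := Finite.exists_max (fun i => M i (P i))
  have hmax : ∀ j, ∀ p ∈ Q, M j p ≤ M i (P i) := fun j p hp => (hPmax j hp).trans (hi j)
  obtain ⟨⟨t, x, l⟩, hpe⟩ : ∃ p, p = P i := ⟨_, rfl⟩
  have hPQ := hP i
  rw [← hpe] at hmax hPQ
  clear hPmax hi hP hpe P
  obtain ⟨⟨htl, htu⟩, ⟨hxl, hxu⟩, ⟨hll, hlu⟩⟩ := hPQ
  simp only at htl htu hxl hxu hll hlu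
  have htT : t ∈ Icc 0 T := ⟨htl, by linarith [ht0.2]⟩
  have hxR : x ∈ Icc 0 R := ⟨hxl, hxu⟩
  have hlK : l ∈ Icc 0 K := ⟨by linarith [hl0.1], hlu⟩
  have hge := hmax i0 _ hp0
  simp only [hM] at hge
  have hq : m - δ * (R^2/4) ≤ E t * w i t x l := by
    have : (x0 - R/2)^2 ≤ R^2/4 := by nlinarith [hx0.1, hx0.2]
    nlinarith [mul_le_mul_of_nonneg_left this hδ.le, mul_nonneg hδ.le (sq_nonneg (x - R/2))]
  have hq0 : 0 < E t * w i t x l := by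
    have : δ * (R^2/4) ≤ δ * S := by
      apply mul_le_mul_of_nonneg_left _ hδ.le
      have : 0 ≤ B * R := by positivity
      linarith
    linarith
  have hw : 0 < w i t x l := pos_of_mul_pos_right hq0 (hEpos t).le
  have ht : t ∈ Ioo 0 T := by
    refine ⟨lt_of_le_of_ne htl ?_, by linarith [ht0.2]⟩
    rintro rfl
    linarith [hinit i x hxR l hlK]
  have hl : l ∈ Ioo 0 K := by
    refine ⟨by linarith [hl0.1], lt_of_le_of_ne hlu ?_⟩
    rintro rfl
    linarith [hterm i t htT x hxR]
  have hl' : l ∈ Ico 0 K := ⟨hl.1.le, hl.2⟩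
  -- derivative in x of the penalised function
  have hHx : ∀ j, ∀ y ∈ Icc 0 R, HasDerivWithinAt (fun y => M j (t, y, l))
      (E t * wx j t y l - δ * (2 * (y - R/2))) (Icc 0 R) y := by
    intro j y hy
    have h1 := (hdx j t htT y hy l hl').const_mul (E t)
    have h2 : HasDerivAt (fun y : ℝ => δ * (y - R/2)^2) (δ * (2 * (y - R/2))) y := by
      have := (((hasDerivAt_id y).sub_const (R/2)).pow 2).const_mul δ
      simpa using this
    exact h1.sub h2.hasDerivWithinAt
  have hQm : ∀ y ∈ Icc 0 R, (t, y, l) ∈ Q := fun y hy => ⟨⟨htl, htu⟩, hy, ⟨hll, hlu⟩⟩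
  rcases eq_or_lt_of_le hxl with h0 | h0
  · -- junction
    subst h0
    have hMj : ∀ j, M j (t, 0, l) = M i (t, 0, l) := by
      intro j; simp only [hM]; rw [hj j i t htT l hlK]
    have hwx : ∀ j, wx j t 0 l < 0 := by
      intro j
      have := aux_right hR le_rfl (hHx j 0 hxR)
        (fun y hy => (hmax j _ (hQm y hy)).trans (hMj j).ge)
      have h3 : 0 < δ * R := by positivity
      have h4 : E t * wx j t 0 l < 0 := by nlinarith
      by_contra h5
      push Not at h5
      have := mul_nonneg (hEpos t).le h5
      linarith
    have hw0l : w0l t l ≤ 0 := by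
      have hlm : l < (l+K)/2 := by linarith [hl.2]
      refine aux_right (f := fun m => w i t 0 m) hlm ?_ (hdl i t htT l hl') ?_
      · intro y hy
        exact ⟨by linarith [hy.1, hl.1], by linarith [hy.2, hl.2]⟩
      · intro y hy
        have := hmax i (t, 0, y) ⟨⟨htl, htu⟩, hxR, ⟨by linarith [hy.1], by linarith [hy.2, hl.2]⟩⟩
        simp only [hM] at this
        exact le_of_mul_le_mul_left (by linarith) (hEpos t)
    have hsum : ∑ j, αc j t l * wx j t 0 l < 0 := by
      apply Finset.sum_neg
      · intro j _
        exact mul_neg_of_pos_of_neg (lt_of_lt_of_le hαl (hellα j t htT l hlK)) (hwx j)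
      · exact Finset.univ_nonempty
    have := hjun i t ht l hl
    have := mul_nonneg (hrpos t htT l hlK) hw.le
    linarith
  rcases eq_or_lt_of_le hxu with h1 | h1
  · subst h1
    have h2 := aux_left hR le_rfl (hHx i x hxR) (fun y hy => hmax i _ (hQm y hy))
    have h3 := mul_nonneg (hEpos t).le (neg_nonneg.2 (hend i t ht l hl))
    have h4 : 0 < δ * x := by positivity
    nlinarith
  have hx : x ∈ Ioo 0 R := ⟨h0, h1⟩
  obtain ⟨hd1, hd2⟩ := hdt i t ht x hx l hl
  have hs := aux_second (f := fun y => M i (t, y, l))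
    (g := fun y => E t * wx i t y l - δ * (2 * (y - R/2)))
    (D := E t * wxx i t x l - δ * 2) hx
    (fun y hy => (hHx i y (Ioo_subset_Icc_self hy)).hasDerivAt (Icc_mem_nhds hy.1 hy.2))
    (by
      have h2 : HasDerivAt (fun y : ℝ => δ * (2 * (y - R/2))) (δ * 2) x := by
        have := (((hasDerivAt_id x).sub_const (R/2)).const_mul 2).const_mul δ
        simpa using this
      exact (hd2.const_mul (E t)).sub h2)
    (fun y hy => hmax i _ (hQm y (Ioo_subset_Icc_self hy)))
  obtain ⟨hs1, hs2⟩ := hs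
  have htd : 0 ≤ -(C+1) * E t * w i t x l + E t * wt i t x l := by
    refine aux_left (f := fun s => E s * w i s x l) ht.1 (subset_univ _) 
      ((hEd t).mul hd1).hasDerivWithinAt ?_
    intro y hy
    have := hmax i (y, x, l) ⟨⟨hy.1, hy.2.trans htu⟩, hxR, ⟨hll, hlu⟩⟩
    simp only [hM] at this
    linarith
  have hA' := hA i t htT x hxR l hlK
  have hB' := hB i t htT x hxR l hlK
  have hC' := abs_le.1 (hC i t htT x hxR l hlK)
  have he := mul_nonpos_of_nonneg_of_nonpos (hEpos t).le (heq i t ht x hx l hl)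
  have e1 : a i t x l * (E t * wxx i t x l) ≤ δ * (2 * A) := by
    have := mul_le_mul_of_nonneg_left (show E t * wxx i t x l ≤ δ * 2 by linarith) hA'.1
    have := mul_le_mul_of_nonneg_right hA'.2 (show 0 ≤ δ * 2 by positivity)
    linarith
  have e2 : -(b i t x l * (E t * wx i t x l)) ≤ δ * (B * R) := by
    rw [show E t * wx i t x l = δ * (2 * (x - R/2)) by linarith]
    refine (neg_le_abs _).trans ?_
    rw [abs_mul, abs_mul, abs_of_pos hδ]
    have h3 : |2 * (x - R/2)| ≤ R := by rw [abs_le]; constructor <;> linarith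
    have := mul_le_mul hB' h3 (abs_nonneg _) hB0
    have h4 := mul_le_mul_of_nonneg_left this hδ.le
    calc |b i t x l| * (δ * |2 * (x - R/2)|) = δ * (|b i t x l| * |2 * (x - R/2)|) := by ring
      _ ≤ _ := h4
  have e3 : -(c i t x l * (E t * w i t x l)) ≤ C * (E t * w i t x l) := by
    have := mul_le_mul_of_nonneg_right hC'.1 hq0.le
    linarith
  have e4 : E t * w i t x l ≤ δ * (2 * A) + δ * (B * R) := by linarith
  rw [hS] at hδm
  linarith

/-- **Theorem 2.8 (Comparison theorem)**: under assumption (H), a super solution `u` and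
a sub solution `v` of the local-time Kirchhoff system in the class `𝔠^{1,2,0}_{0}(Ω_T)`
satisfying `v ≤ u` at `t = 0` and at `l = K` satisfy `v ≤ u` everywhere. -/
theorem comparison_theorem_local_time_kirchhoff
    (I : ℕ) (hI : 2 ≤ I) (T R K al αl : ℝ)
    (hT : 0 < T) (hR : 0 < R) (hK : 0 < K) (hal : 0 < al) (hαl : 0 < αl)
    (a b c f : Fin I → ℝ → ℝ → ℝ → ℝ) (αc : Fin I → ℝ → ℝ → ℝ) (r φc : ℝ → ℝ → ℝ)
    -- assumption (H): W^{1,∞} regularity, nonnegativity of r, ellipticity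
    (hHa : LB3 I T R K a) (hHb : LB3 I T R K b) (hHc : LB3 I T R K c)
    (hHf : LB3 I T R K f) (hHα : LB2I I T K αc) (hHr : LB2 T K r) (hHφ : LB2 T K φc)
    (hrpos : ∀ t ∈ Icc (0:ℝ) T, ∀ l ∈ Icc (0:ℝ) K, 0 ≤ r t l)
    (hella : ∀ i, ∀ t ∈ Icc (0:ℝ) T, ∀ x ∈ Icc (0:ℝ) R, ∀ l ∈ Icc (0:ℝ) K,
      al ≤ a i t x l)
    (hellα : ∀ i, ∀ t ∈ Icc (0:ℝ) T, ∀ l ∈ Icc (0:ℝ) K, αl ≤ αc i t l)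
    -- the super solution u and the sub solution v with their derivative data
    (u ut ux uxx : Fin I → ℝ → ℝ → ℝ → ℝ) (u0l : ℝ → ℝ → ℝ)
    (v vt vx vxx : Fin I → ℝ → ℝ → ℝ → ℝ) (v0l : ℝ → ℝ → ℝ)
    (hclassu : InClassC120 I T R K u ut ux uxx u0l)
    (hclassv : InClassC120 I T R K v vt vx vxx v0l)
    (hsuper : SuperSol I T R K a b c f αc r φc u ut ux uxx u0l)
    (hsub : SubSol I T R K a b c f αc r φc v vt vx vxx v0l)
    (hinit : ∀ i, ∀ x ∈ Icc (0:ℝ) R, ∀ l ∈ Icc (0:ℝ) K, v i 0 x l ≤ u i 0 x l)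
    (hterm : ∀ i, ∀ t ∈ Icc (0:ℝ) T, ∀ x ∈ Icc (0:ℝ) R, v i t x K ≤ u i t x K) :
    ∀ i, ∀ t ∈ Icc (0:ℝ) T, ∀ x ∈ Icc (0:ℝ) R, ∀ l ∈ Icc (0:ℝ) K,
      v i t x l ≤ u i t x l := by
  unfold InClassC120 at hclassu hclassv
  unfold SuperSol at hsuper
  unfold SubSol at hsub
  unfold LB3 at hHa hHb hHc
  obtain ⟨uj, uc, udx, -, udt, _, _, _, udl, _⟩ := hclassu
  obtain ⟨vj, vc, vdx, -, vdt, _, _, _, vdl, _⟩ := hclassv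
  obtain ⟨us1, us2, us3⟩ := hsuper
  obtain ⟨vs1, vs2, vs3⟩ := hsub
  obtain ⟨A, hA⟩ := hHa
  obtain ⟨B, hB⟩ := hHb
  obtain ⟨C, hC⟩ := hHc
  have key := aux_core I hI T R K αl hR hαl a b c αc r A B C
    (fun i t ht x hx l hl => ⟨hal.le.trans (hella i t ht x hx l hl),
      (le_abs_self _).trans (hA i t ht t ht x hx x hx l hl l hl).1⟩)
    (fun i t ht x hx l hl => (hB i t ht t ht x hx x hx l hl l hl).1)
    (fun i t ht x hx l hl => (hC i t ht t ht x hx x hx l hl l hl).1)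
    hrpos hellα
    (fun i t x l => v i t x l - u i t x l) (fun i t x l => vt i t x l - ut i t x l)
    (fun i t x l => vx i t x l - ux i t x l) (fun i t x l => vxx i t x l - uxx i t x l)
    (fun t l => v0l t l - u0l t l)
    (fun i j t ht l hl => by rw [uj i j t ht l hl, vj i j t ht l hl])
    (fun i => (vc i).sub (uc i))
    (fun i t ht x hx l hl => (vdx i t ht x hx l hl).sub (udx i t ht x hx l hl))
    (fun i t ht x hx l hl => ⟨(vdt i t ht x hx l hl).1.sub (udt i t ht x hx l hl).1,
      (vdt i t ht x hx l hl).2.sub (udt i t ht x hx l hl).2⟩)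
    (fun i t ht l hl => (vdl i t ht l hl).sub (udl i t ht l hl))
    (fun i t ht x hx l hl => by
      have h1 := us1 i t ht x hx l hl
      have h2 := vs1 i t ht x hx l hl
      linarith)
    (fun i t ht l hl => by
      have h1 := us2 i t ht l hl
      have h2 := vs2 i t ht l hl
      simp only [mul_sub, Finset.sum_sub_distrib]
      linarith)
    (fun i t ht l hl => by
      have h1 := us3 i t ht l hl
      have h2 := vs3 i t ht l hl
      linarith)
    (fun i x hx l hl => by simpa using hinit i x hx l hl)
    (fun i t ht x hx => by simpa using hterm i t ht x hx)
  intro i t ht x hx l hl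
  rcases eq_or_lt_of_le hl.2 with h | h
  · rw [h]; exact hterm i t ht x hx
  have hmaps : ∀ s ∈ Icc (0:ℝ) 1, (t * (1 - s), x, l + s * (K - l)) ∈
      Icc 0 T ×ˢ Icc 0 R ×ˢ Icc 0 K := by
    intro s hs
    have h1 := mul_nonneg ht.1 hs.1
    have h2 := mul_nonneg ht.1 (sub_nonneg.2 hs.2)
    have h3 := mul_nonneg hs.1 (sub_nonneg.2 h.le)
    have h4 := mul_nonneg (sub_nonneg.2 hs.2) (sub_nonneg.2 h.le)
    exact ⟨⟨h2, by linarith [ht.2]⟩, hx, ⟨by linarith [hl.1], by linarith⟩⟩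
  have hco : ContinuousOn (fun s : ℝ => v i (t * (1 - s)) x (l + s * (K - l))
      - u i (t * (1 - s)) x (l + s * (K - l))) (Icc 0 1) :=
    ((vc i).sub (uc i)).comp (f := fun s : ℝ => (t * (1 - s), x, l + s * (K - l)))
      (by fun_prop) hmaps
  set F : ℝ → ℝ := fun s => v i (t * (1 - s)) x (l + s * (K - l))
      - u i (t * (1 - s)) x (l + s * (K - l)) with hF
  have hneg : ∀ s ∈ Ioo (0:ℝ) 1, F s ≤ 0 := by
    intro s hs
    have hm := hmaps s (Ioo_subset_Icc_self hs)
    have g1 : t * (1 - s) < T := by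
      rcases eq_or_lt_of_le ht.1 with h5 | h5
      · rw [← h5]; simpa using hT
      · have := mul_pos h5 hs.1
        linarith [ht.2]
    have g2 : 0 < l + s * (K - l) := by
      have := mul_pos hs.1 (sub_pos.2 h)
      linarith [hl.1]
    exact key i (t * (1 - s)) ⟨hm.1.1, g1⟩ x hx (l + s * (K - l)) ⟨g2, hm.2.2.2⟩
  have h0 : ContinuousWithinAt F (Ioo 0 1) 0 :=
    (hco 0 ⟨le_rfl, zero_le_one⟩).mono Ioo_subset_Icc_self
  have hne : (nhdsWithin (0:ℝ) (Ioo 0 1)).NeBot := by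
    rw [nhdsWithin_Ioo_eq_nhdsGT zero_lt_one]; infer_instance
  have h1 : F 0 ≤ 0 := le_of_tendsto h0.tendsto (Filter.eventually_of_mem self_mem_nhdsWithin hneg)
  have h2 : F 0 = v i t x l - u i t x l := by simp [hF]
  linarith
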